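/- Let Ω ⊆ ℝ^d be a bounded measurable set, let f : ℝ^d → ℝ be continuously differentiable with compact support, and let θ : ℝ^d → ℝ^d be continuously differentiable with compact support. Then the map t ↦ ∫_{Φ_t(Ω)} f(x) dx, where Φ_t(x) = x + t·θ(x), is differentiable at t = 0 and its derivative there equals ∫_Ω div(f·θ)(x) dx, where div(f·θ) = Σ_{i=1}^d ∂_i (f·θ_i). -/

import Mathlib

open MeasureTheory

noncomputable def sdG (d : ℕ) (p : ℝ × (Fin d → Fin d → ℝ)) : ℝ :=
  Matrix.det (1 + p.1 • Matrix.of p.2)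

lemma sdG_contDiff (d : ℕ) : ContDiff ℝ 1 (sdG d) := by
  unfold sdG
  simp only [Matrix.det_apply, Matrix.add_apply, Matrix.smul_apply, Matrix.of_apply]
  refine ContDiff.sum fun σ _ => ContDiff.const_smul _ (contDiff_prod fun i _ => ?_)
  fun_prop

lemma sdG_zero (d : ℕ) (m : Fin d → Fin d → ℝ) : sdG d (0, m) = 1 := by
  simp [sdG]

lemma sdG_hasDerivAt (d : ℕ) (m : Fin d → Fin d → ℝ) (t : ℝ) :
    HasDerivAt (fun s => sdG d (s, m)) (fderiv ℝ (sdG d) (t, m) (1, 0)) t := by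
  have h1 : HasFDerivAt (sdG d) (fderiv ℝ (sdG d) (t, m)) (t, m) :=
    ((sdG_contDiff d).differentiable (by simp) _).hasFDerivAt
  exact h1.comp_hasDerivAt t ((hasDerivAt_id t).prodMk (hasDerivAt_const t m))

lemma sdG_fderiv_zero (d : ℕ) (m : Fin d → Fin d → ℝ) :
    fderiv ℝ (sdG d) (0, m) (1, 0) = ∑ i, m i i := by
  refine (sdG_hasDerivAt d m 0).unique ?_
  obtain ⟨q, hq⟩ : ∃ q : Polynomial ℝ, ∀ s : ℝ, sdG d (s, m) =
      1 + (Matrix.of m).trace * s + q.eval s * s ^ 2 :=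
    ⟨_, fun s => Matrix.det_one_add_smul s (Matrix.of m)⟩
  simp only [hq]
  have h := (((hasDerivAt_id (0:ℝ)).const_mul (Matrix.of m).trace).const_add 1).add
    ((q.hasDerivAt 0).mul ((hasDerivAt_id (0:ℝ)).pow 2))
  convert! h using 1
  simp [Matrix.trace]

lemma sd_det (d : ℕ) (A : EuclideanSpace ℝ (Fin d) →L[ℝ] EuclideanSpace ℝ (Fin d)) (t : ℝ) :
    (ContinuousLinearMap.id ℝ _ + t • A).det =
      sdG d (t, fun i j => A (EuclideanSpace.single j 1) i) := by
  unfold sdG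
  rw [ContinuousLinearMap.det,
    ← LinearMap.det_toMatrix (EuclideanSpace.basisFun (Fin d) ℝ).toBasis]
  congr 1
  ext i j
  simp [LinearMap.toMatrix_apply, Matrix.one_apply]

lemma sd_div (d : ℕ) (f : EuclideanSpace ℝ (Fin d) → ℝ) (hf : ContDiff ℝ 1 f)
    (θ : EuclideanSpace ℝ (Fin d) → EuclideanSpace ℝ (Fin d)) (hθ : ContDiff ℝ 1 θ)
    (x : EuclideanSpace ℝ (Fin d)) :
    ∑ i : Fin d, fderiv ℝ (fun y => f y * θ y i) x (EuclideanSpace.single i 1) =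
      (∑ i, fderiv ℝ θ x (EuclideanSpace.single i 1) i) * f x + fderiv ℝ f x (θ x) := by
  have hf1 := (hf.differentiable (by simp) x).hasFDerivAt
  have hθ1 := (hθ.differentiable (by simp) x).hasFDerivAt
  have h : ∀ i, fderiv ℝ (fun y => f y * θ y i) x (EuclideanSpace.single i 1) =
      fderiv ℝ θ x (EuclideanSpace.single i 1) i * f x +
        θ x i * fderiv ℝ f x (EuclideanSpace.single i 1) := by
    intro i
    have h2 : HasFDerivAt (fun y => θ y i)
      ((EuclideanSpace.proj i : EuclideanSpace ℝ (Fin d) →L[ℝ] ℝ).comp (fderiv ℝ θ x)) x :=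
      (EuclideanSpace.proj i : EuclideanSpace ℝ (Fin d) →L[ℝ] ℝ).hasFDerivAt.comp x hθ1
    have h4 := (hf1.mul h2).fderiv
    change fderiv ℝ (fun y => f y * θ y i) x = _ at h4
    rw [h4]
    simp [mul_comm]
  have h3 : θ x = ∑ i, θ x i • EuclideanSpace.single i (1:ℝ) := by
    conv_lhs => rw [← (EuclideanSpace.basisFun (Fin d) ℝ).sum_repr (θ x)]
    simp
  simp only [h, Finset.sum_add_distrib, Finset.sum_mul]
  congr 1
  conv_rhs => rw [h3]
  simp

/-- Shape derivative of a volume integral: for `J(Ω) = ∫_Ω f`, the map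
`t ↦ J(Φ_t(Ω))` with `Φ_t(x) = x + t • θ(x)` is differentiable at `t = 0`
with derivative `∫_Ω div (f • θ)`. -/
theorem shape_derivative_volume_integral
    (d : ℕ) (Ω : Set (EuclideanSpace ℝ (Fin d)))
    (hΩmeas : MeasurableSet Ω) (hΩbdd : Bornology.IsBounded Ω)
    (f : EuclideanSpace ℝ (Fin d) → ℝ)
    (hf : ContDiff ℝ 1 f) (hfsupp : HasCompactSupport f)
    (θ : EuclideanSpace ℝ (Fin d) → EuclideanSpace ℝ (Fin d))
    (hθ : ContDiff ℝ 1 θ) (hθsupp : HasCompactSupport θ) :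
    HasDerivAt (fun t : ℝ => ∫ x in (fun x => x + t • θ x) '' Ω, f x)
      (∫ x in Ω,
        ∑ i : Fin d, fderiv ℝ (fun y => f y * θ y i) x (EuclideanSpace.single i 1)) 0 := by
  have hK : IsCompact (closure Ω) := hΩbdd.isCompact_closure
  have hfc := hf.continuous
  have hθc := hθ.continuous
  have hf'c : Continuous (fderiv ℝ f) := hf.continuous_fderiv (by simp)
  have hθ'c : Continuous (fderiv ℝ θ) := hθ.continuous_fderiv (by simp)
  have hGc := (sdG_contDiff d).continuous
  have hG'c : Continuous (fderiv ℝ (sdG d)) := (sdG_contDiff d).continuous_fderiv (by simp)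
  obtain ⟨m, hm⟩ : ∃ m : EuclideanSpace ℝ (Fin d) → Fin d → Fin d → ℝ,
    m = fun x i j => fderiv ℝ θ x (EuclideanSpace.single j 1) i := ⟨_, rfl⟩
  have hmc : Continuous m := by
    rw [hm]
    refine continuous_pi fun i => continuous_pi fun j => ?_
    exact (EuclideanSpace.proj i : EuclideanSpace ℝ (Fin d) →L[ℝ] ℝ).continuous.comp
      (hθ'c.clm_apply continuous_const)
  let F : ℝ → EuclideanSpace ℝ (Fin d) → ℝ := fun t x => sdG d (t, m x) * f (x + t • θ x)
  let F' : ℝ → EuclideanSpace ℝ (Fin d) → ℝ := fun t x =>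
    fderiv ℝ (sdG d) (t, m x) (1, 0) * f (x + t • θ x) +
      sdG d (t, m x) * fderiv ℝ f (x + t • θ x) (θ x)
  have hFc : Continuous (fun p : ℝ × EuclideanSpace ℝ (Fin d) => F p.1 p.2) := by
    simp only [F]; fun_prop
  have hF'c : Continuous (fun p : ℝ × EuclideanSpace ℝ (Fin d) => F' p.1 p.2) := by
    simp only [F']; fun_prop
  have hFd : ∀ t x, HasDerivAt (fun s => F s x) (F' t x) t := by
    intro t x
    have h1 : HasDerivAt (fun s : ℝ => x + s • θ x) (θ x) t := by
      simpa using ((hasDerivAt_id t).smul_const (θ x)).const_add x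
    exact (sdG_hasDerivAt d (m x) t).mul
      ((hf.differentiable (by simp) _).hasFDerivAt.comp_hasDerivAt t h1)
  obtain ⟨C, hC⟩ := ((isCompact_Icc (a := (-1:ℝ)) (b := 1)).prod hK).exists_bound_of_continuousOn
    hF'c.continuousOn
  have hfin : volume Ω < ⊤ := hΩbdd.measure_lt_top
  have : IsFiniteMeasure (volume.restrict Ω) := ⟨by simpa using hfin⟩
  have key : HasDerivAt (fun t => ∫ x in Ω, F t x) (∫ x in Ω, F' 0 x) 0 := by
    refine (hasDerivAt_integral_of_dominated_loc_of_deriv_le (bound := fun _ => C)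
      (s := Set.Icc (-1) 1) (Icc_mem_nhds (by norm_num) (by norm_num)) ?_ ?_ ?_ ?_ ?_ ?_).2
    · exact Filter.Eventually.of_forall fun t =>
        (hFc.comp (Continuous.prodMk_right t)).aestronglyMeasurable
    · exact ((hFc.comp (Continuous.prodMk_right 0)).continuousOn.integrableOn_compact hK).mono_set
        subset_closure
    · exact (hF'c.comp (Continuous.prodMk_right 0)).aestronglyMeasurable
    · refine (ae_restrict_mem hΩmeas).mono fun x hx t ht => ?_
      exact hC (t, x) ⟨ht, subset_closure hx⟩
    · exact integrable_const C
    · exact Filter.Eventually.of_forall fun x t _ => hFd t x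
  have hval : (∫ x in Ω, F' 0 x) = ∫ x in Ω,
        ∑ i : Fin d, fderiv ℝ (fun y => f y * θ y i) x (EuclideanSpace.single i 1) := by
    congr 1
    ext x
    rw [sd_div d f hf θ hθ x]
    simp [F', sdG_zero, sdG_fderiv_zero, hm]
  rw [← hval]
  refine key.congr_of_eventuallyEq ?_
  obtain ⟨L, hL⟩ := hθ.lipschitzWith_of_hasCompactSupport hθsupp (by simp)
  have hpos : ∀ᶠ t in nhds (0:ℝ), ∀ x ∈ closure Ω, 0 < sdG d (t, m x) := by
    refine hK.eventually_forall_of_forall_eventually fun x _ => ?_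
    have hc : Continuous (fun p : ℝ × EuclideanSpace ℝ (Fin d) => sdG d (p.1, m p.2)) := by
      fun_prop
    refine hc.continuousAt.eventually (lt_mem_nhds ?_)
    simp [sdG_zero]
  have hsm : ∀ᶠ t in nhds (0:ℝ), |t| * (L:ℝ) < 1 := by
    have hc : Continuous (fun t : ℝ => |t| * (L:ℝ)) := by fun_prop
    refine hc.continuousAt.eventually (gt_mem_nhds ?_)
    simp
  filter_upwards [hpos, hsm] with t ht1 ht2
  rw [integral_image_eq_integral_abs_det_fderiv_smul volume hΩmeas
    (f' := fun x => ContinuousLinearMap.id ℝ _ + t • fderiv ℝ θ x)]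
  · refine setIntegral_congr_fun hΩmeas fun x hx => ?_
    have := ht1 x (subset_closure hx)
    simp only [sd_det, F, smul_eq_mul]
    rw [hm] at this ⊢
    rw [abs_of_pos this]
  · intro x _
    exact ((hasFDerivAt_id x).add
      ((hθ.differentiable (by simp) x).hasFDerivAt.const_smul t)).hasFDerivWithinAt
  · intro x _ y _ hxy
    have h1 : x - y = t • (θ y - θ x) := by
      simp only at hxy
      rw [smul_sub, sub_eq_sub_iff_add_eq_add, hxy, add_comm]
    have h2 : ‖x - y‖ ≤ |t| * L * ‖x - y‖ := by
      calc ‖x - y‖ = |t| * ‖θ y - θ x‖ := by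
            conv_lhs => rw [h1, norm_smul, Real.norm_eq_abs]
        _ ≤ |t| * (L * ‖x - y‖) := by
            gcongr
            rw [norm_sub_rev x y]
            exact hL.norm_sub_le y x
        _ = _ := by ring
    have h3 : ‖x - y‖ = 0 := by nlinarith [norm_nonneg (x - y)]
    exact sub_eq_zero.1 (norm_eq_zero.1 h3)
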